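/- (Main Lemma) There exist a real ρ > 1, positive reals δ, q, K and an N ∈ ℕ such that for every n ≥ N and every x ∈ [−K, K], the probability that both Z_n^x([−K,0]) > δ·ρ^n and Z_n^x([0,K]) > δ·ρ^n is at least q. -/

import Mathlib

open MeasureTheory ProbabilityTheory

/-- Words over the alphabet `{1,2}` (represented as `Fin 2`), indexing the nodes of the
binary tree of the construction.  A word `i :: w` is a child of the word `w`. -/
abbrev LarssonWord := List (Fin 2)

/-- The left endpoint of the level-`w.length` interval of Larsson's random Cantor set
indexed by the word `w`, given the family `u` of (realized) uniform random variables.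
The level-0 interval is `[0,1]`; if `I_w = [α, α + a^n]` is a level-`n` interval, its two
level-`(n+1)` subintervals are `[α + a^n (b + U), α + a^n (b + U) + a^(n+1)]` and
`[α + a^n (1/2 + a/2 + U'), α + a^n (1/2 + a/2 + U') + a^(n+1)]`. -/
noncomputable def larssonLeft (a b : ℝ) (u : LarssonWord → ℝ) : LarssonWord → ℝ
  | [] => 0
  | (i :: w) => larssonLeft a b u w +
      a ^ w.length * ((if i = 0 then b else 1 / 2 + a / 2) + u (i :: w))

/-- `C^n`: the union of the `2^n` level-`n` intervals. -/
noncomputable def larssonLevel (a b : ℝ) (u : LarssonWord → ℝ) (n : ℕ) : Set ℝ :=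
  ⋃ w ∈ {w : LarssonWord | w.length = n},
    Set.Icc (larssonLeft a b u w) (larssonLeft a b u w + a ^ n)

/-- Larsson's random Cantor set `C = ⋂ n, C^n`. -/
noncomputable def larssonCantor (a b : ℝ) (u : LarssonWord → ℝ) : Set ℝ :=
  ⋂ n : ℕ, larssonLevel a b u n

/-- `Z_n^x(A)`: the number of pairs `(i, j)` of level-`n` words such that
`Φ(Q_{(i,j)}, x) = (u − v + x)/a^n ∈ A`, where `u` (resp. `v`) is the left endpoint of the
level-`n` interval of `C₁` (resp. `C₂`) indexed by `i` (resp. `j`). -/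
noncomputable def larssonZ (a b : ℝ) (u₁ u₂ : LarssonWord → ℝ) (n : ℕ) (x : ℝ)
    (A : Set ℝ) : ℕ :=
  Nat.card {p : LarssonWord × LarssonWord //
    p.1.length = n ∧ p.2.length = n ∧
    (larssonLeft a b u₁ p.1 - larssonLeft a b u₂ p.2 + x) / a ^ n ∈ A}

/-!
Write `Z` for the number of level-`n` squares below `Q_{(v,v)}` whose displacement `u − v + x` lies
in a window of length `K * a ^ n` inside `[-K, K]`; it is bounded below by the second moment method.

The difference of the two uniforms attached to the level-1 ancestor of `v` is independent of the
rest of the displacement and has a triangular density.  For `a < 1 / 2` the rest is bounded by less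
than `t` once `v` is long and `K` small, so each square contributes with probability at least a
constant times `a ^ n`, and `𝔼 Z` is at least a constant times `(4 * a) ^ n`.

If the ancestors of two squares agree `e` generations up but not `e - 1` generations up, then one
square uses a variable of size `a ^ (n - e)` that the other does not, so both displacements lie in
the window with probability at most `a ^ n * a ^ e`.  At most `4 ^ e` squares share their `e`-th
ancestor with a given one, and `∑ (4 * a) ^ e` is geometric with ratio `4 * a > 1`, so `𝔼 Z²` is at
most a constant times `(4 * a) ^ (2 * n)`.

Two words `v` with different level-1 ancestors involve disjoint families of variables, hence the
events for the windows `[-K, 0]` and `[0, K]`, counted in two such subtrees, are independent.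
-/

section SecondMoment

variable {Ω : Type*} [MeasurableSpace Ω] {μ : Measure Ω}

lemma sq_setIntegral_le_measureReal_mul_integral_sq {Z : Ω → ℝ} (hZ : MemLp Z 2 μ) {s : Set Ω}
    (hs : MeasurableSet s) (hμs : μ s ≠ ⊤) :
    (∫ ω in s, Z ω ∂μ) ^ 2 ≤ μ.real s * ∫ ω, Z ω ^ 2 ∂μ := by
  set f := hZ.toLp Z
  set e : Lp ℝ 2 μ := indicatorConstLp 2 hs hμs 1
  have inner_e_f : inner ℝ e f = ∫ ω in s, Z ω ∂μ := by
    rw [L2.inner_indicatorConstLp_one]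
    exact setIntegral_congr_ae hs (hZ.coeFn_toLp.mono fun ω h _ => h)
  have inner_e_e : inner ℝ e e = μ.real s := by
    rw [L2.inner_indicatorConstLp_indicatorConstLp]
    simp [Measure.real]
  have inner_f_f : inner ℝ f f = ∫ ω, Z ω ^ 2 ∂μ := by
    rw [L2.inner_def]
    refine integral_congr_ae (hZ.coeFn_toLp.mono fun ω h => ?_)
    simp only [h, real_inner_self_eq_norm_sq, Real.norm_eq_abs, sq_abs, f]
  rw [← inner_e_f, ← inner_e_e, ← inner_f_f, sq]
  exact real_inner_mul_inner_self_le e f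

lemma sq_integral_sub_le_measureReal_lt_mul_integral_sq [IsProbabilityMeasure μ] {Z : Ω → ℝ}
    (hZm : Measurable Z) (hZ : MemLp Z 2 μ) {c : ℝ} (hc : 0 ≤ c) (hcZ : c ≤ ∫ ω, Z ω ∂μ) :
    (∫ ω, Z ω ∂μ - c) ^ 2 ≤ μ.real {ω | c < Z ω} * ∫ ω, Z ω ^ 2 ∂μ := by
  have hG : MeasurableSet {ω | c < Z ω} := measurableSet_lt measurable_const hZm
  have hint : Integrable Z μ := hZ.integrable one_le_two
  have compl_le : ∫ ω in {ω | c < Z ω}ᶜ, Z ω ∂μ ≤ c := calc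
    _ ≤ ∫ _ in {ω | c < Z ω}ᶜ, c ∂μ :=
      setIntegral_mono_on hint.integrableOn (integrable_const c).integrableOn hG.compl
        fun ω hω => not_lt.1 hω
    _ ≤ c := by
      rw [setIntegral_const, smul_eq_mul]
      exact mul_le_of_le_one_left hc measureReal_le_one
  refine le_trans ?_ (sq_setIntegral_le_measureReal_mul_integral_sq hZ hG (measure_ne_top _ _))
  gcongr
  linarith [integral_add_compl hG hint]

lemma sq_sub_le_measureReal_lt_sum_indicator_mul [IsProbabilityMeasure μ] {κ : Type*}
    {s : Finset κ} {E : κ → Set Ω} (hE : ∀ i, MeasurableSet (E i)) {c m S : ℝ} (hc : 0 ≤ c)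
    (hcm : c ≤ m) (hm : m ≤ ∑ i ∈ s, μ.real (E i))
    (hS : ∑ i ∈ s, ∑ j ∈ s, μ.real (E i ∩ E j) ≤ S) :
    (m - c) ^ 2 ≤ μ.real {ω | c < ∑ i ∈ s, (E i).indicator 1 ω} * S := by
  set Z : Ω → ℝ := fun ω => ∑ i ∈ s, (E i).indicator 1 ω with hZ_def
  have integral_one_indicator : ∀ {A : Set Ω}, MeasurableSet A →
      ∫ ω, A.indicator (1 : Ω → ℝ) ω ∂μ = μ.real A := fun hA => integral_indicator_one hA
  have integrable_one_indicator : ∀ {A : Set Ω}, MeasurableSet A →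
      Integrable (A.indicator (1 : Ω → ℝ)) μ := fun hA => (integrable_const 1).indicator hA
  have hZm : Measurable Z := by
    exact Finset.measurable_sum s fun i _ => measurable_one.indicator (hE i)
  have hZ : MemLp Z 2 μ :=
    memLp_finsetSum s fun i _ => (memLp_const 1).indicator (hE i)
  have mean : ∫ ω, Z ω ∂μ = ∑ i ∈ s, μ.real (E i) := by
    rw [integral_finsetSum _ fun i _ => integrable_one_indicator (hE i)]
    simp_rw [integral_one_indicator (hE _)]
  have second_moment : ∫ ω, Z ω ^ 2 ∂μ = ∑ i ∈ s, ∑ j ∈ s, μ.real (E i ∩ E j) := by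
    have Z_sq : ∀ ω, Z ω ^ 2 = ∑ i ∈ s, ∑ j ∈ s, (E i ∩ E j).indicator (1 : Ω → ℝ) ω := by
      simp [hZ_def, sq, Finset.sum_mul_sum, Set.inter_indicator_one]
    simp_rw [Z_sq]
    have hinter := fun i j => (hE i).inter (hE j)
    rw [integral_finsetSum _ fun i _ =>
      integrable_finsetSum _ fun j _ => integrable_one_indicator (hinter i j)]
    refine Finset.sum_congr rfl fun i _ => ?_
    rw [integral_finsetSum _ fun j _ => integrable_one_indicator (hinter i j)]
    simp_rw [integral_one_indicator (hinter i _)]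
  calc (m - c) ^ 2 ≤ (∫ ω, Z ω ∂μ - c) ^ 2 := by
        gcongr
        rwa [mean]
    _ ≤ μ.real {ω | c < Z ω} * ∫ ω, Z ω ^ 2 ∂μ :=
        sq_integral_sub_le_measureReal_lt_mul_integral_sq hZm hZ hc
          (mean ▸ hcm.trans hm)
    _ ≤ μ.real {ω | c < Z ω} * S := by
        rw [second_moment]
        gcongr

end SecondMoment

section Independence

variable {Ω ι : Type*} {E : ι → Type*} [∀ i, MeasurableSpace (E i)] {U : ∀ i, Ω → E i}

lemma measurable_iSup_comap_of_dependsOn {β : Type*} [MeasurableSpace β] {f : (∀ i, E i) → β}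
    (hf : Measurable f) {S : Set ι} (hfS : DependsOn f S) :
    Measurable[⨆ i ∈ S, MeasurableSpace.comap (U i) inferInstance] fun ω => f fun i => U i ω := by
  classical
  set m : MeasurableSpace Ω := ⨆ i ∈ S, MeasurableSpace.comap (U i) inferInstance
  rcases isEmpty_or_nonempty Ω with _ | ⟨⟨ω₀⟩⟩
  · exact measurable_of_empty _
  have frozen : (fun ω => f fun i => U i ω) =
      fun ω => f (S.piecewise (fun i => U i ω) fun i => U i ω₀) := by
    funext ω
    exact hfS fun i hi => (S.piecewise_eq_of_mem (fun i => U i ω) (fun i => U i ω₀) hi).symm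
  rw [frozen]
  refine hf.comp (measurable_pi_lambda _ fun i => ?_)
  by_cases hi : i ∈ S
  · simp only [Set.piecewise_eq_of_mem _ _ _ hi]
    exact measurable_iff_comap_le.2 (le_biSup (fun i => MeasurableSpace.comap (U i) _) hi)
  · simp only [Set.piecewise_eq_of_notMem _ _ _ hi]
    exact measurable_const

lemma indepFun_comp_of_dependsOn {β γ : Type*} [MeasurableSpace Ω] {P : Measure Ω}
    [MeasurableSpace β] [MeasurableSpace γ] (hU : ∀ i, Measurable (U i)) (hind : iIndepFun U P)
    {f : (∀ i, E i) → β} (hf : Measurable f) {S : Set ι} (hfS : DependsOn f S)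
    {g : (∀ i, E i) → γ} (hg : Measurable g) {T : Set ι} (hgT : DependsOn g T)
    (hST : Disjoint S T) :
    IndepFun (fun ω => f fun i => U i ω) (fun ω => g fun i => U i ω) P := by
  have sigma_indep := indep_iSup_of_disjoint (fun i => (hU i).comap_le) hind hST
  exact indep_of_indep_of_le_left
    (indep_of_indep_of_le_right sigma_indep (measurable_iSup_comap_of_dependsOn hg hgT).comap_le)
    (measurable_iSup_comap_of_dependsOn hf hfS).comap_le

lemma ofReal_sq_le_measure_lt_and_lt [MeasurableSpace Ω] {P : Measure Ω} [IsFiniteMeasure P]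
    {X Y : Ω → ℝ} (hXY : IndepFun X Y P) {p c : ℝ} (hp : 0 ≤ p) (hX : p ≤ P.real {ω | c < X ω})
    (hY : p ≤ P.real {ω | c < Y ω}) :
    ENNReal.ofReal (p ^ 2) ≤ P {ω | c < X ω ∧ c < Y ω} := by
  refine (ENNReal.ofReal_le_iff_le_toReal (measure_ne_top _ _)).2 ?_
  have product := hXY.measure_inter_preimage_eq_mul (Set.Ioi c) (Set.Ioi c) measurableSet_Ioi
    measurableSet_Ioi
  calc p ^ 2 ≤ P.real {ω | c < X ω} * P.real {ω | c < Y ω} := by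
        rw [sq]
        exact mul_le_mul hX hY hp measureReal_nonneg
    _ = P.real {ω | c < X ω ∧ c < Y ω} :=
        ENNReal.toReal_mul.symm.trans (congrArg ENNReal.toReal product.symm)

end Independence

section Conditioning

variable {Ω β γ : Type*} [MeasurableSpace Ω] [MeasurableSpace β] [MeasurableSpace γ]
  {P : Measure Ω} [IsFiniteMeasure P] {Y : Ω → β} {V : Ω → γ} {S : Set (β × γ)} {G : Set β}
  {k : ENNReal}

lemma measure_inter_prodMk_preimage_eq_setLIntegral (hY : Measurable Y) (hV : Measurable V)
    (hYV : IndepFun Y V P) (hS : MeasurableSet S) (hG : MeasurableSet G) :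
    P {ω | Y ω ∈ G ∧ (Y ω, V ω) ∈ S} = ∫⁻ y in G, P.map V (Prod.mk y ⁻¹' S) ∂(P.map Y) := by
  have law_pair := (indepFun_iff_map_prod_eq_prod_map_map hY.aemeasurable hV.aemeasurable).1 hYV
  calc P {ω | Y ω ∈ G ∧ (Y ω, V ω) ∈ S}
      = P.map (fun ω => (Y ω, V ω)) (S ∩ G ×ˢ Set.univ) := by
        rw [Measure.map_apply (hY.prodMk hV) (hS.inter (hG.prod .univ))]
        congr 1
        ext ω
        simp [and_comm]
    _ = _ := by
        rw [law_pair, ← Measure.restrict_apply hS, ← Measure.prod_restrict, Measure.restrict_univ,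
          Measure.prod_apply hS]

lemma measure_inter_prodMk_preimage_le (hY : Measurable Y) (hV : Measurable V)
    (hYV : IndepFun Y V P) (hS : MeasurableSet S) (hG : MeasurableSet G)
    (hk : ∀ y ∈ G, P.map V (Prod.mk y ⁻¹' S) ≤ k) :
    P {ω | Y ω ∈ G ∧ (Y ω, V ω) ∈ S} ≤ k * P (Y ⁻¹' G) := by
  rw [measure_inter_prodMk_preimage_eq_setLIntegral hY hV hYV hS hG, ← Measure.map_apply hY hG,
    ← setLIntegral_const]
  exact setLIntegral_mono' hG hk

lemma le_measure_inter_prodMk_preimage (hY : Measurable Y) (hV : Measurable V)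
    (hYV : IndepFun Y V P) (hS : MeasurableSet S) (hG : MeasurableSet G)
    (hk : ∀ y ∈ G, k ≤ P.map V (Prod.mk y ⁻¹' S)) :
    k * P (Y ⁻¹' G) ≤ P {ω | Y ω ∈ G ∧ (Y ω, V ω) ∈ S} := by
  rw [measure_inter_prodMk_preimage_eq_setLIntegral hY hV hYV hS hG, ← Measure.map_apply hY hG,
    ← setLIntegral_const]
  exact setLIntegral_mono' hG hk

end Conditioning

section AntiConcentration

variable {Ω ι : Type*} [MeasurableSpace Ω] {P : Measure Ω} {U : ι → Ω → ℝ}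

lemma volume_add_mul_mem_Icc {c : ℝ} (hc : c ≠ 0) (y α β : ℝ) :
    volume {v : ℝ | y + c * v ∈ Set.Icc α β} = ENNReal.ofReal ((β - α) / |c|) := by
  have preimage_eq : {v : ℝ | y + c * v ∈ Set.Icc α β} =
      (fun v => c * v) ⁻¹' Set.Icc (α - y) (β - y) := by
    ext v
    simp only [Set.mem_ofPred_eq, Set.mem_preimage, Set.mem_Icc, sub_le_iff_le_add',
      le_sub_iff_add_le']
  rw [preimage_eq, Real.volume_preimage_mul_left hc, Real.volume_Icc,
    ← ENNReal.ofReal_mul (abs_nonneg _), abs_inv, sub_sub_sub_cancel_right, inv_mul_eq_div]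

lemma measure_and_mem_Icc_le_of_dependsOn (hU : ∀ i, Measurable (U i)) (hind : iIndepFun U P)
    {q : ι} {C : ENNReal} (hC : P.map (U q) ≤ C • volume)
    {S : Set (ι → ℝ)} (hS : MeasurableSet S) (hSq : DependsOn (· ∈ S) {q}ᶜ)
    {g : (ι → ℝ) → ℝ} (hg : Measurable g) {c : ℝ} (hc : c ≠ 0)
    (hgq : DependsOn (fun u => g u - c * u q) {q}ᶜ) (α β : ℝ) :
    P {ω | (U · ω) ∈ S ∧ g (U · ω) ∈ Set.Icc α β} ≤
      C * ENNReal.ofReal ((β - α) / |c|) * P {ω | (U · ω) ∈ S} := by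
  have := hind.isProbabilityMeasure
  set f : (ι → ℝ) → Prop × ℝ := fun u => (u ∈ S, g u - c * u q)
  have hf : Measurable f :=
    (measurable_mem.2 hS).prodMk (by fun_prop)
  have hfq : DependsOn f {q}ᶜ := fun u u' h => Prod.ext (hSq h) (hgq h)
  have hY_indep : IndepFun (fun ω => f (U · ω)) (U q) P :=
    indepFun_comp_of_dependsOn (T := {q}) hU hind hf hfq (measurable_pi_apply q)
      (fun u u' h => h q rfl) disjoint_compl_left
  have hU_pi : Measurable fun ω => (U · ω) := measurable_pi_lambda _ hU
  have slice_le : ∀ y : Prop × ℝ,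
      P.map (U q) {v | y.2 + c * v ∈ Set.Icc α β} ≤ C * ENNReal.ofReal ((β - α) / |c|) := by
    intro y
    rw [← volume_add_mul_mem_Icc hc y.2]
    exact hC _
  have hG : MeasurableSet {y : Prop × ℝ | y.1} := measurableSet_setOfPred.2 measurable_fst
  have bound := measure_inter_prodMk_preimage_le (hf.comp hU_pi) (hU q) hY_indep
    (S := {z | z.1.2 + c * z.2 ∈ Set.Icc α β}) (measurableSet_Icc.preimage (by fun_prop)) hG
    fun y _ => slice_le y
  simpa [f] using bound

end AntiConcentration

section Uniform

variable {Ω : Type*} [MeasurableSpace Ω] {P : Measure Ω} {V V' Y : Ω → ℝ} {t κ α β : ℝ}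

lemma map_le_smul_volume_of_isUniform (hV : pdf.IsUniform V (Set.Icc 0 t) P) :
    P.map V ≤ (ENNReal.ofReal t)⁻¹ • volume := by
  rw [hV, ProbabilityTheory.cond, Real.volume_Icc, sub_zero]
  gcongr
  exact Measure.restrict_le_self

lemma inv_ofReal_mul_ofReal_mul_le {s : ℝ} (ht : 0 < t) (hκ : κ ≤ t) (hs : 0 ≤ s) :
    (ENNReal.ofReal t)⁻¹ * ENNReal.ofReal (κ * s) ≤ ENNReal.ofReal s := by
  rw [← ENNReal.ofReal_inv_of_pos ht, ← ENNReal.ofReal_mul (by positivity), ← mul_assoc,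
    inv_mul_eq_div]
  exact ENNReal.ofReal_le_ofReal (mul_le_of_le_one_left hs ((div_le_one ht).2 hκ))

lemma ofReal_div_le_map_of_isUniform (hV : pdf.IsUniform V (Set.Icc 0 t) P) (ht : 0 < t)
    {s : Set ℝ} (hs : Set.Icc α β ⊆ Set.Icc 0 t ∩ s) :
    ENNReal.ofReal ((β - α) / t) ≤ P.map V s := by
  rw [hV, cond_apply measurableSet_Icc, Real.volume_Icc, sub_zero, div_eq_inv_mul,
    ENNReal.ofReal_mul (by positivity), ENNReal.ofReal_inv_of_pos ht, ← Real.volume_Icc]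
  gcongr

lemma ae_mem_Icc_of_isUniform (hVm : Measurable V) (hV : pdf.IsUniform V (Set.Icc 0 t) P) :
    ∀ᵐ ω ∂P, V ω ∈ Set.Icc 0 t := by
  refine ae_of_ae_map hVm.aemeasurable ?_
  rw [hV]
  exact ae_cond_mem measurableSet_Icc

/- `V - V'` has density `(t - |z|) / t ^ 2`, which is at least `κ / t ^ 2` for `|z| ≤ t - κ`. -/
lemma ofReal_le_measure_sub_mem_Icc_of_isUniform [IsFiniteMeasure P] (hVm : Measurable V)
    (hV : pdf.IsUniform V (Set.Icc 0 t) P) (hV'm : Measurable V')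
    (hV' : pdf.IsUniform V' (Set.Icc 0 t) P) (hVV' : IndepFun V' V P) (ht : 0 < t)
    (hα : -(t - κ) ≤ α) (hβ : β ≤ t - κ) (hαβ : β - α ≤ t - κ) (hle : α ≤ β) :
    ENNReal.ofReal (κ * (β - α) / t ^ 2) ≤ P {ω | V ω - V' ω ∈ Set.Icc α β} := by
  set G := Set.Icc (max 0 (-α)) (min t (t - β))
  have slice_ge : ∀ y ∈ G, ENNReal.ofReal ((β - α) / t) ≤
      P.map V {v | v - y ∈ Set.Icc α β} := by
    rintro y ⟨hy, hy'⟩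
    have := (max_le_iff.1 hy).2
    have := (le_min_iff.1 hy').2
    rw [← add_sub_add_left_eq_sub β α y]
    refine ofReal_div_le_map_of_isUniform hV ht fun v ⟨hv, hv'⟩ => ⟨⟨?_, ?_⟩, ?_, ?_⟩ <;> linarith
  have base_ge : ENNReal.ofReal (κ / t) ≤ P (V' ⁻¹' G) := by
    rw [← Measure.map_apply hV'm measurableSet_Icc]
    refine le_trans ?_ (ofReal_div_le_map_of_isUniform hV' ht (s := G)
      (Set.subset_inter (Set.Icc_subset_Icc (le_max_left _ _) (min_le_left _ _)) subset_rfl))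
    gcongr
    rw [le_sub_iff_add_le, le_min_iff, ← le_sub_iff_add_le', ← le_sub_iff_add_le', max_le_iff,
      max_le_iff]
    refine ⟨⟨?_, ?_⟩, ?_, ?_⟩ <;> linarith
  calc ENNReal.ofReal (κ * (β - α) / t ^ 2)
      = ENNReal.ofReal ((β - α) / t) * ENNReal.ofReal (κ / t) := by
        rw [← ENNReal.ofReal_mul (div_nonneg (sub_nonneg.2 hle) ht.le)]
        congr 1
        ring
    _ ≤ ENNReal.ofReal ((β - α) / t) * P (V' ⁻¹' G) := by gcongr
    _ ≤ P {ω | V' ω ∈ G ∧ (V' ω, V ω) ∈ {z : ℝ × ℝ | z.2 - z.1 ∈ Set.Icc α β}} :=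
        le_measure_inter_prodMk_preimage hV'm hVm hVV'
          (measurableSet_Icc.preimage (by fun_prop)) measurableSet_Icc slice_ge
    _ ≤ P {ω | V ω - V' ω ∈ Set.Icc α β} := measure_mono fun ω hω => hω.2

lemma ofReal_le_measure_add_sub_mem_Icc_of_isUniform [IsProbabilityMeasure P]
    (hVm : Measurable V) (hV : pdf.IsUniform V (Set.Icc 0 t) P) (hV'm : Measurable V')
    (hV' : pdf.IsUniform V' (Set.Icc 0 t) P) (hVV' : IndepFun V' V P) (hYm : Measurable Y)
    (hY_indep : IndepFun Y (fun ω => V ω - V' ω) P) (ht : 0 < t) (hκ : 0 ≤ κ)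
    (hY : ∀ᵐ ω ∂P, |Y ω| ≤ t - 3 * κ) (hα : -κ ≤ α) (hβ : β ≤ κ) (hle : α ≤ β) :
    ENNReal.ofReal (κ * (β - α) / t ^ 2) ≤ P {ω | Y ω + (V ω - V' ω) ∈ Set.Icc α β} := by
  have hD : Measurable fun ω => V ω - V' ω := hVm.sub hV'm
  have slice_ge : ∀ y ∈ {y : ℝ | |y| ≤ t - 3 * κ}, ENNReal.ofReal (κ * (β - α) / t ^ 2) ≤
      P.map (fun ω => V ω - V' ω) {v | y + v ∈ Set.Icc α β} := by
    intro y (hy : |y| ≤ t - 3 * κ)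
    obtain ⟨_, _⟩ := abs_le.1 hy
    have translate : P.map (fun ω => V ω - V' ω) {v | y + v ∈ Set.Icc α β} =
        P {ω | V ω - V' ω ∈ Set.Icc (α - y) (β - y)} := by
      refine (Measure.map_apply hD (measurable_const_add y measurableSet_Icc)).trans ?_
      congr 1
      ext ω
      exact and_congr sub_le_iff_le_add'.symm le_sub_iff_add_le'.symm
    rw [translate, ← sub_sub_sub_cancel_right β α y]
    exact ofReal_le_measure_sub_mem_Icc_of_isUniform hVm hV hV'm hV' hVV' ht
      (by linarith) (by linarith) (by linarith) (by linarith)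
  have hG : MeasurableSet {y : ℝ | |y| ≤ t - 3 * κ} :=
    measurableSet_le measurable_abs measurable_const
  have base_eq : P (Y ⁻¹' {y : ℝ | |y| ≤ t - 3 * κ}) = 1 :=
    (mem_ae_iff_prob_eq_one (hYm hG)).1 hY
  calc ENNReal.ofReal (κ * (β - α) / t ^ 2)
      ≤ P {ω | Y ω ∈ {y : ℝ | |y| ≤ t - 3 * κ} ∧
          (Y ω, V ω - V' ω) ∈ {z : ℝ × ℝ | z.1 + z.2 ∈ Set.Icc α β}} := by
        have h := le_measure_inter_prodMk_preimage hYm hD hY_indep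
          (S := {z | z.1 + z.2 ∈ Set.Icc α β}) (measurableSet_Icc.preimage (by fun_prop)) hG
          slice_ge
        rwa [base_eq, mul_one] at h
    _ ≤ P {ω | Y ω + (V ω - V' ω) ∈ Set.Icc α β} := measure_mono fun ω hω => hω.2

end Uniform

section Endpoints

variable {a b t : ℝ} {u u' : LarssonWord → ℝ}

lemma larssonLeft_append (u : LarssonWord → ℝ) (w v : LarssonWord) :
    larssonLeft a b u (w ++ v) =
      larssonLeft a b u v + a ^ v.length * larssonLeft a b (fun s => u (s ++ v)) w := by
  induction w with
  | nil => simp [larssonLeft]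
  | cons i w ih =>
    rw [List.cons_append, larssonLeft, ih, larssonLeft, List.length_append, List.cons_append,
      pow_add]
    ring

lemma abs_le_div_one_sub_of_abs_cons_sub_le {α : Type*} {f : List α → ℝ} {M : ℝ} (ha : 0 ≤ a)
    (ha1 : a < 1) (hM : 0 ≤ M) (hnil : f [] = 0)
    (hcons : ∀ i w, |f (i :: w) - f w| ≤ a ^ w.length * M) (w : List α) :
    |f w| ≤ M / (1 - a) := by
  rw [le_div_iff₀ (sub_pos.2 ha1)]
  suffices |f w| * (1 - a) ≤ M * (1 - a ^ w.length) from
    this.trans (mul_le_of_le_one_right hM (sub_le_self 1 (by positivity)))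
  induction w with
  | nil => simp [hnil]
  | cons i w ih =>
    have triangle : |f (i :: w)| ≤ |f w| + a ^ w.length * M := by
      linarith [hcons i w, abs_sub_abs_le_abs_sub (f (i :: w)) (f w)]
    calc |f (i :: w)| * (1 - a) ≤ (|f w| + a ^ w.length * M) * (1 - a) :=
          mul_le_mul_of_nonneg_right triangle (sub_nonneg.2 ha1.le)
      _ ≤ M * (1 - a ^ w.length) + a ^ w.length * M * (1 - a) := by linarith
      _ = M * (1 - a ^ (i :: w).length) := by
          rw [List.length_cons]
          ring

lemma abs_larssonLeft_sub_le (ha : 0 ≤ a) (ha1 : a < 1) (hu : ∀ s, |u s - u' s| ≤ t)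
    (w : LarssonWord) : |larssonLeft a b u w - larssonLeft a b u' w| ≤ t / (1 - a) := by
  refine abs_le_div_one_sub_of_abs_cons_sub_le
    (f := fun w => larssonLeft a b u w - larssonLeft a b u' w) ha ha1
    ((abs_nonneg _).trans (hu [])) (sub_self 0) (fun i w => ?_) w
  have telescope : larssonLeft a b u (i :: w) - larssonLeft a b u' (i :: w) -
      (larssonLeft a b u w - larssonLeft a b u' w) = a ^ w.length * (u (i :: w) - u' (i :: w)) := by
    simp only [larssonLeft]
    ring
  rw [telescope, abs_mul, abs_of_nonneg (pow_nonneg ha _)]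
  gcongr
  exact hu _

lemma abs_larssonLeft_le (ha : 0 ≤ a) (ha1 : a < 1) (hu : ∀ s, |u s| ≤ t) (w : LarssonWord) :
    |larssonLeft a b u w| ≤ (|b| + |1 / 2 + a / 2| + t) / (1 - a) := by
  have ht : 0 ≤ t := (abs_nonneg _).trans (hu [])
  refine abs_le_div_one_sub_of_abs_cons_sub_le ha ha1 (by positivity) rfl (fun i w => ?_) w
  rw [larssonLeft, add_sub_cancel_left, abs_mul, abs_of_nonneg (pow_nonneg ha _)]
  gcongr
  refine (abs_add_le _ _).trans (add_le_add ?_ (hu _))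
  split_ifs
  · exact le_add_of_nonneg_right (abs_nonneg _)
  · exact le_add_of_nonneg_left (abs_nonneg _)

lemma measurable_larssonLeft (w : LarssonWord) : Measurable fun u => larssonLeft a b u w := by
  induction w with
  | nil => exact measurable_const
  | cons i w ih => exact ih.add (by fun_prop)

lemma dependsOn_larssonLeft (w : LarssonWord) :
    DependsOn (fun u => larssonLeft a b u w) {s | s ≠ [] ∧ s <:+ w} := by
  induction w with
  | nil => exact fun u u' _ => rfl
  | cons i w ih =>
    intro u u' h
    have tail_eq : larssonLeft a b u w = larssonLeft a b u' w :=
      ih fun s hs => h s ⟨hs.1, hs.2.trans (List.suffix_cons i w)⟩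
    simp only [larssonLeft, tail_eq, h (i :: w) ⟨List.cons_ne_nil i w, List.suffix_rfl⟩]

lemma dependsOn_larssonLeft_sub_mul (p s : LarssonWord) (c : Fin 2) :
    DependsOn (fun u => larssonLeft a b u (p ++ c :: s) - a ^ s.length * u (c :: s))
      {c :: s}ᶜ := by
  intro u u' h
  have base_eq : larssonLeft a b u s = larssonLeft a b u' s :=
    dependsOn_larssonLeft s fun r hr => h r fun hrc => by
      simpa using (hrc ▸ hr.2 : c :: s <:+ s).length_le
  have top_eq : larssonLeft a b (fun r => u (r ++ c :: s)) p =
      larssonLeft a b (fun r => u' (r ++ c :: s)) p :=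
    dependsOn_larssonLeft p fun r hr => h _ fun hrc => hr.1 (by simpa using hrc)
  simp only [larssonLeft_append, larssonLeft, base_eq, top_eq]
  ring

end Endpoints

section Words

variable {v w i j : LarssonWord} {N d n e : ℕ}

/-- The words indexing the nodes `N` generations below the node `v`: in the convention of
`LarssonWord` these are the words `w ++ v` with `w` of length `N`. -/
def descendants (v : LarssonWord) (N : ℕ) : Finset LarssonWord :=
  Finset.univ.map ⟨fun w : List.Vector (Fin 2) N => w.1 ++ v,
    fun _ _ h => Subtype.ext (List.append_cancel_right h)⟩

lemma mem_descendants : w ∈ descendants v N ↔ ∃ p : LarssonWord, p.length = N ∧ p ++ v = w := by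
  rw [descendants, Finset.mem_map]
  exact ⟨fun ⟨p, _, hpw⟩ => ⟨p.1, p.2, hpw⟩,
    fun ⟨p, hp, hpw⟩ => ⟨⟨p, hp⟩, Finset.mem_univ _, hpw⟩⟩

lemma card_descendants (v : LarssonWord) (N : ℕ) : (descendants v N).card = 2 ^ N := by
  simp [descendants]

lemma length_of_mem_descendants (hw : w ∈ descendants v N) : w.length = N + v.length := by
  obtain ⟨p, rfl, rfl⟩ := mem_descendants.1 hw
  exact List.length_append

lemma suffix_of_mem_descendants (hw : w ∈ descendants v N) : v <:+ w := by
  obtain ⟨p, -, rfl⟩ := mem_descendants.1 hw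
  exact List.suffix_append p v

lemma drop_eq_of_mem_descendants (hw : w ∈ descendants v N) : w.drop N = v := by
  obtain ⟨p, rfl, rfl⟩ := mem_descendants.1 hw
  exact List.drop_left

lemma card_filter_descendants_drop_eq_le (he : e ≤ N) :
    ((descendants v N).filter fun i => i.drop e = w).card ≤ 2 ^ e := by
  rw [← card_descendants w e]
  refine Finset.card_le_card fun i hi => ?_
  obtain ⟨hiv, rfl⟩ := Finset.mem_filter.1 hi
  refine mem_descendants.2 ⟨i.take e, ?_, List.take_append_drop e i⟩
  rw [List.length_take, length_of_mem_descendants hiv]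
  omega

lemma exists_cons_suffix_of_drop_ne (hi : i.length = n) (hj : j.length = n) (hd : d < n)
    (hne : i.drop d ≠ j.drop d) :
    ∃ c s, c :: s <:+ j ∧ ¬ c :: s <:+ i ∧ s.length + (d + 1) = n := by
  have drop_j := List.drop_eq_getElem_cons (l := j) (hj.symm ▸ hd)
  refine ⟨j[d], j.drop (d + 1), drop_j ▸ List.drop_suffix d j, fun hsuffix => hne ?_, ?_⟩
  · refine List.IsSuffix.eq_of_length (List.suffix_of_suffix_length_le (List.drop_suffix d i)
      (drop_j ▸ hsuffix) ?_) ?_ <;> simp [hi, hj]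
  · rw [List.length_drop]
    omega

end Words

section Shift

variable {a b x t : ℝ} {z z' : LarssonWord × LarssonWord} {n d : ℕ}

/-- The displacement `u − v + x` of the corner `(u, v)` of the square `Q_{(i,j)}`, so that
`Φ(Q_{(i,j)}, x) = larssonShift a b x u (i, j) / a ^ n`.  The variables of the two copies are
collected in one family, with first index `false` for `C₁` and `true` for `C₂`. -/
noncomputable def larssonShift (a b x : ℝ) (u : Bool × LarssonWord → ℝ)
    (z : LarssonWord × LarssonWord) : ℝ :=
  larssonLeft a b (fun w => u (false, w)) z.1 - larssonLeft a b (fun w => u (true, w)) z.2 + x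

lemma measurable_larssonShift (z : LarssonWord × LarssonWord) :
    Measurable fun u => larssonShift a b x u z := by
  refine Measurable.add_const (Measurable.sub ?_ ?_) x <;>
  exact (measurable_larssonLeft _).comp (by fun_prop)

lemma dependsOn_larssonShift (z : LarssonWord × LarssonWord) :
    DependsOn (fun u => larssonShift a b x u z)
      {q | q.2 ≠ [] ∧ q.2 <:+ bif q.1 then z.2 else z.1} := by
  intro u u' h
  have left_eq := @dependsOn_larssonLeft a b z.1 (fun w => u (false, w))
    (fun w => u' (false, w)) fun s hs => h (false, s) hs
  have right_eq := @dependsOn_larssonLeft a b z.2 (fun w => u (true, w))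
    (fun w => u' (true, w)) fun s hs => h (true, s) hs
  simp only [larssonShift] at left_eq right_eq ⊢
  rw [left_eq, right_eq]

lemma dependsOn_larssonShift_sub_mul_left {s : LarssonWord} {c : Fin 2} (hs : c :: s <:+ z.1) :
    DependsOn (fun u => larssonShift a b x u z - a ^ s.length * u (false, c :: s))
      {(false, c :: s)}ᶜ := by
  intro u u' h
  obtain ⟨p, hp⟩ := hs
  have left_eq := @dependsOn_larssonLeft_sub_mul a b p s c (fun w => u (false, w))
    (fun w => u' (false, w)) fun r hr => h (false, r) (by simpa using hr)
  have right_eq := @dependsOn_larssonLeft a b z.2 (fun w => u (true, w))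
    (fun w => u' (true, w)) fun r _ => h (true, r) (by simp)
  simp only [larssonShift, ← hp] at left_eq right_eq ⊢
  linarith

lemma dependsOn_larssonShift_sub_mul_right {s : LarssonWord} {c : Fin 2} (hs : c :: s <:+ z.2) :
    DependsOn (fun u => larssonShift a b x u z - -a ^ s.length * u (true, c :: s))
      {(true, c :: s)}ᶜ := by
  intro u u' h
  obtain ⟨p, hp⟩ := hs
  have left_eq := @dependsOn_larssonLeft a b z.1 (fun w => u (false, w))
    (fun w => u' (false, w)) fun r _ => h (false, r) (by simp)
  have right_eq := @dependsOn_larssonLeft_sub_mul a b p s c (fun w => u (true, w))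
    (fun w => u' (true, w)) fun r hr => h (true, r) (by simpa using hr)
  simp only [larssonShift, ← hp] at left_eq right_eq ⊢
  linarith

/- Past the branch point of `z` and `z'` the square `z'` uses a variable that `z` does not. -/
lemma exists_dependsOn_compl_singleton_of_drop_ne (ha : 0 < a) (hz₁ : z.1.length = n)
    (hz₂ : z.2.length = n) (hz'₁ : z'.1.length = n) (hz'₂ : z'.2.length = n) (hd : d < n)
    (hne : ¬(z.1.drop d = z'.1.drop d ∧ z.2.drop d = z'.2.drop d)) :
    ∃ q c, |c| * a ^ (d + 1) = a ^ n ∧ DependsOn (fun u => larssonShift a b x u z) {q}ᶜ ∧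
      DependsOn (fun u => larssonShift a b x u z' - c * u q) {q}ᶜ := by
  rcases not_and_or.1 hne with hne | hne
  · obtain ⟨c, s, hs', hs, hlen⟩ := exists_cons_suffix_of_drop_ne hz₁ hz'₁ hd hne
    refine ⟨(false, c :: s), a ^ s.length, ?_, (dependsOn_larssonShift z).mono ?_,
      dependsOn_larssonShift_sub_mul_left hs'⟩
    · rw [abs_of_pos (pow_pos ha _), ← pow_add, hlen]
    · rintro q ⟨-, hq⟩ rfl
      exact hs hq
  · obtain ⟨c, s, hs', hs, hlen⟩ := exists_cons_suffix_of_drop_ne hz₂ hz'₂ hd hne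
    refine ⟨(true, c :: s), -a ^ s.length, ?_, (dependsOn_larssonShift z).mono ?_,
      dependsOn_larssonShift_sub_mul_right hs'⟩
    · rw [abs_neg, abs_of_pos (pow_pos ha _), ← pow_add, hlen]
    · rintro q ⟨-, hq⟩ rfl
      exact hs hq

end Shift

section DescendantPairs

variable {v : LarssonWord} {N e : ℕ}

/-- The pairs `(i, j)` indexing the squares `N` generations below the square `Q_{(v,v)}`. -/
abbrev descendantPairs (v : LarssonWord) (N : ℕ) : Finset (LarssonWord × LarssonWord) :=
  descendants v N ×ˢ descendants v N

lemma card_descendantPairs (v : LarssonWord) (N : ℕ) : (descendantPairs v N).card = 4 ^ N := by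
  rw [Finset.card_product, card_descendants, ← mul_pow]
  norm_num

lemma card_filter_descendantPairs_drop_eq_le (z : LarssonWord × LarssonWord) (he : e ≤ N) :
    ((descendantPairs v N).filter fun z' =>
      z.1.drop e = z'.1.drop e ∧ z.2.drop e = z'.2.drop e).card ≤ 4 ^ e := by
  simp_rw [eq_comm (a := List.drop e z.1), eq_comm (a := List.drop e z.2)]
  rw [Finset.filter_product (fun i => List.drop e i = List.drop e z.1)
    (fun j => List.drop e j = List.drop e z.2), Finset.card_product, show 4 = 2 * 2 from rfl,
    mul_pow]
  exact Nat.mul_le_mul (card_filter_descendants_drop_eq_le he)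
    (card_filter_descendants_drop_eq_le he)

lemma length_eq_of_mem_descendantPairs {z : LarssonWord × LarssonWord}
    (hz : z ∈ descendantPairs v N) :
    z.1.length = N + v.length ∧ z.2.length = N + v.length :=
  ⟨length_of_mem_descendants (Finset.mem_product.1 hz).1,
    length_of_mem_descendants (Finset.mem_product.1 hz).2⟩

lemma drop_eq_of_mem_descendantPairs {z z' : LarssonWord × LarssonWord}
    (hz : z ∈ descendantPairs v N) (hz' : z' ∈ descendantPairs v N) :
    z.1.drop N = z'.1.drop N ∧ z.2.drop N = z'.2.drop N := by
  obtain ⟨hz₁, hz₂⟩ := Finset.mem_product.1 hz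
  obtain ⟨hz'₁, hz'₂⟩ := Finset.mem_product.1 hz'
  exact ⟨(drop_eq_of_mem_descendants hz₁).trans (drop_eq_of_mem_descendants hz'₁).symm,
    (drop_eq_of_mem_descendants hz₂).trans (drop_eq_of_mem_descendants hz'₂).symm⟩

end DescendantPairs

section UpperBound

variable {Ω : Type*} [MeasurableSpace Ω] {P : Measure Ω} {U : Bool × LarssonWord → Ω → ℝ}
  {C : ENNReal} {a b x α β : ℝ} {z z' : LarssonWord × LarssonWord} {v : LarssonWord} {N d : ℕ}

lemma measure_larssonShift_mem_Icc_le (hU : ∀ q, Measurable (U q)) (hind : iIndepFun U P)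
    (hC : ∀ q, P.map (U q) ≤ C • volume) {r : Fin 2} (hz : [r] <:+ z.1) :
    P {ω | larssonShift a b x (U · ω) z ∈ Set.Icc α β} ≤ C * ENNReal.ofReal (β - α) := by
  have := hind.isProbabilityMeasure
  simpa using measure_and_mem_Icc_le_of_dependsOn hU hind (hC _) .univ (fun _ _ _ => by simp)
    (measurable_larssonShift z) (by simp) (dependsOn_larssonShift_sub_mul_left hz) α β

lemma measure_larssonShift_mem_Icc_and_le (hU : ∀ q, Measurable (U q)) (hind : iIndepFun U P)
    (hC : ∀ q, P.map (U q) ≤ C • volume) (ha : 0 < a)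
    (hW : C * ENNReal.ofReal (β - α) ≤ ENNReal.ofReal (a ^ (N + v.length)))
    (hz : z ∈ descendantPairs v N) (hz' : z' ∈ descendantPairs v N) (hd : d < N)
    (hne : ¬(z.1.drop d = z'.1.drop d ∧ z.2.drop d = z'.2.drop d)) :
    P {ω | larssonShift a b x (U · ω) z ∈ Set.Icc α β ∧
        larssonShift a b x (U · ω) z' ∈ Set.Icc α β} ≤
      ENNReal.ofReal (a ^ (d + 1)) * P {ω | larssonShift a b x (U · ω) z ∈ Set.Icc α β} := by
  obtain ⟨hz₁, hz₂⟩ := length_eq_of_mem_descendantPairs hz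
  obtain ⟨hz'₁, hz'₂⟩ := length_eq_of_mem_descendantPairs hz'
  obtain ⟨q, c, hc, hzq, hz'q⟩ := exists_dependsOn_compl_singleton_of_drop_ne (b := b) (x := x)
    ha hz₁ hz₂ hz'₁ hz'₂ (Nat.lt_add_right _ hd) hne
  have hc_pos : 0 < |c| := pos_of_mul_pos_left (hc ▸ pow_pos ha _) (pow_pos ha _).le
  have hS : MeasurableSet {u | larssonShift a b x u z ∈ Set.Icc α β} :=
    measurable_larssonShift z measurableSet_Icc
  have hSq : DependsOn (· ∈ {u | larssonShift a b x u z ∈ Set.Icc α β}) {q}ᶜ :=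
    fun u u' h => congrArg (· ∈ Set.Icc α β) (hzq h)
  refine (measure_and_mem_Icc_le_of_dependsOn hU hind (hC q) hS hSq (measurable_larssonShift z')
    (abs_pos.1 hc_pos) hz'q α β).trans (mul_le_mul_left ?_ _)
  calc C * ENNReal.ofReal ((β - α) / |c|)
      = C * ENNReal.ofReal (β - α) / ENNReal.ofReal |c| := by
        rw [ENNReal.ofReal_div_of_pos hc_pos, mul_div_assoc]
    _ ≤ ENNReal.ofReal (a ^ (N + v.length)) / ENNReal.ofReal |c| := by gcongr
    _ = ENNReal.ofReal (a ^ (d + 1)) := by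
        rw [← ENNReal.ofReal_div_of_pos hc_pos, ← hc, mul_div_cancel_left₀ _ hc_pos.ne']

lemma exists_measureReal_inter_le_mul_pow (hU : ∀ q, Measurable (U q)) (hind : iIndepFun U P)
    (hC : ∀ q, P.map (U q) ≤ C • volume) (ha : 0 < a) {r : Fin 2} (hr : [r] <:+ v)
    (hW : C * ENNReal.ofReal (β - α) ≤ ENNReal.ofReal (a ^ (N + v.length)))
    (hz : z ∈ descendantPairs v N) (hz' : z' ∈ descendantPairs v N) :
    ∃ e ≤ N, (z.1.drop e = z'.1.drop e ∧ z.2.drop e = z'.2.drop e) ∧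
      P.real ({ω | larssonShift a b x (U · ω) z ∈ Set.Icc α β} ∩
        {ω | larssonShift a b x (U · ω) z' ∈ Set.Icc α β}) ≤ a ^ (N + v.length) * a ^ e := by
  have := hind.isProbabilityMeasure
  have single : P {ω | larssonShift a b x (U · ω) z ∈ Set.Icc α β} ≤
      ENNReal.ofReal (a ^ (N + v.length)) :=
    (measure_larssonShift_mem_Icc_le hU hind hC
      (hr.trans (suffix_of_mem_descendants (Finset.mem_product.1 hz).1))).trans hW
  have agree : ∃ e, z.1.drop e = z'.1.drop e ∧ z.2.drop e = z'.2.drop e :=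
    ⟨N, drop_eq_of_mem_descendantPairs hz hz'⟩
  classical
  have find_le : Nat.find agree ≤ N :=
    Nat.find_min' agree (drop_eq_of_mem_descendantPairs hz hz')
  refine ⟨Nat.find agree, find_le, Nat.find_spec agree, ?_⟩
  refine ENNReal.toReal_le_of_le_ofReal (by positivity) ?_
  rw [ENNReal.ofReal_mul (by positivity)]
  rcases h : Nat.find agree with _ | d
  · rw [pow_zero, ENNReal.ofReal_one, mul_one]
    exact (measure_mono Set.inter_subset_left).trans single
  · refine (measure_larssonShift_mem_Icc_and_le hU hind hC ha hW hz hz' (by omega)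
      (Nat.find_min agree (m := d) (by omega))).trans ?_
    rw [mul_comm]
    gcongr

lemma sum_measureReal_inter_le (hU : ∀ q, Measurable (U q)) (hind : iIndepFun U P)
    (hC : ∀ q, P.map (U q) ≤ C • volume) (ha : 1 / 4 < a) {r : Fin 2} (hr : [r] <:+ v)
    (hW : C * ENNReal.ofReal (β - α) ≤ ENNReal.ofReal (a ^ (N + v.length))) :
    ∑ z ∈ descendantPairs v N, ∑ z' ∈ descendantPairs v N,
      P.real ({ω | larssonShift a b x (U · ω) z ∈ Set.Icc α β} ∩
        {ω | larssonShift a b x (U · ω) z' ∈ Set.Icc α β}) ≤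
      4 ^ N * (a ^ (N + v.length) * ((4 * a) ^ (N + 1) / (4 * a - 1))) := by
  have ha' : 0 < a := by linarith
  rw [show (4 : ℝ) ^ N = (descendantPairs v N).card by rw [card_descendantPairs]; norm_num,
    ← nsmul_eq_mul]
  refine Finset.sum_le_card_nsmul _ _ _ fun z hz => ?_
  classical
  have pointwise : ∀ z' ∈ descendantPairs v N,
      P.real ({ω | larssonShift a b x (U · ω) z ∈ Set.Icc α β} ∩
        {ω | larssonShift a b x (U · ω) z' ∈ Set.Icc α β}) ≤
      ∑ e ∈ Finset.range (N + 1), if z.1.drop e = z'.1.drop e ∧ z.2.drop e = z'.2.drop e then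
        a ^ (N + v.length) * a ^ e else 0 := fun z' hz' => by
    obtain ⟨e, he, hagree, hle⟩ :=
      exists_measureReal_inter_le_mul_pow (b := b) (x := x) hU hind hC ha' hr hW hz hz'
    refine (hle.trans_eq (if_pos hagree).symm).trans (Finset.single_le_sum
      (f := fun e => if z.1.drop e = z'.1.drop e ∧ z.2.drop e = z'.2.drop e then
        a ^ (N + v.length) * a ^ e else 0) (fun e _ => ?_) (Finset.mem_range_succ_iff.2 he))
    positivity
  calc _ ≤ _ := Finset.sum_le_sum pointwise
    _ = ∑ e ∈ Finset.range (N + 1), ((descendantPairs v N).filter fun z' =>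
          z.1.drop e = z'.1.drop e ∧ z.2.drop e = z'.2.drop e).card *
            (a ^ (N + v.length) * a ^ e) := by
        rw [Finset.sum_comm]
        simp_rw [← Finset.sum_filter, Finset.sum_const, nsmul_eq_mul]
    _ ≤ ∑ e ∈ Finset.range (N + 1), 4 ^ e * (a ^ (N + v.length) * a ^ e) := by
        gcongr with e he
        exact_mod_cast card_filter_descendantPairs_drop_eq_le z (Finset.mem_range_succ_iff.1 he)
    _ = a ^ (N + v.length) * ∑ e ∈ Finset.range (N + 1), (4 * a) ^ e := by
        rw [Finset.mul_sum]
        refine Finset.sum_congr rfl fun e _ => ?_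
        rw [mul_pow]
        ring
    _ ≤ a ^ (N + v.length) * ((4 * a) ^ (N + 1) / (4 * a - 1)) := by
        rw [geom_sum_eq (by linarith)]
        gcongr
        · linarith
        · linarith

end UpperBound

section LowerBound

variable {Ω : Type*} [MeasurableSpace Ω] {P : Measure Ω} {U : Bool × LarssonWord → Ω → ℝ}
  {a b x t K α β : ℝ} {z : LarssonWord × LarssonWord} {v : LarssonWord} {r : Fin 2} {N : ℕ}

lemma abs_larssonShift_sub_sub_le {u : Bool × LarssonWord → ℝ} (ha : 0 ≤ a) (ha1 : a < 1)
    (hu : ∀ q, u q ∈ Set.Icc 0 t) (hr : [r] <:+ v) (hz : z ∈ descendantPairs v N) :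
    |larssonShift a b x u z - (u (false, [r]) - u (true, [r]))| ≤ a * (t / (1 - a)) +
      a ^ v.length * (2 * ((|b| + |1 / 2 + a / 2| + t) / (1 - a))) + |x| := by
  obtain ⟨p, rfl⟩ := hr
  rw [List.length_append, List.length_singleton]
  obtain ⟨hz₁, hz₂⟩ := Finset.mem_product.1 hz
  obtain ⟨w, -, hw⟩ := mem_descendants.1 hz₁
  obtain ⟨w', -, hw'⟩ := mem_descendants.1 hz₂
  have hu_abs : ∀ q, |u q| ≤ t := fun q => abs_le.2 ⟨by linarith [(hu q).1, (hu q).2], (hu q).2⟩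
  set near := larssonLeft a b (fun s => u (false, s ++ [r])) p -
    larssonLeft a b (fun s => u (true, s ++ [r])) p
  set far := larssonLeft a b (fun s => u (false, s ++ (p ++ [r]))) w
  set far' := larssonLeft a b (fun s => u (true, s ++ (p ++ [r]))) w'
  have near_le : |near| ≤ t / (1 - a) :=
    abs_larssonLeft_sub_le ha ha1 (fun s => abs_sub_le_of_nonneg_of_le (hu _).1 (hu _).2
      (hu _).1 (hu _).2) p
  have far_sub_le : |far - far'| ≤ 2 * ((|b| + |1 / 2 + a / 2| + t) / (1 - a)) := by
    rw [two_mul]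
    exact (abs_sub _ _).trans (add_le_add (abs_larssonLeft_le ha ha1 (fun s => hu_abs _) w)
      (abs_larssonLeft_le ha ha1 (fun s => hu_abs _) w'))
  have decomposition : larssonShift a b x u z - (u (false, [r]) - u (true, [r])) =
      a * near + a ^ (p.length + 1) * (far - far') + x := by
    simp only [larssonShift, ← hw, ← hw', larssonLeft_append, larssonLeft, near, far, far',
      List.length_append, List.length_cons, List.length_nil]
    ring
  rw [decomposition]
  refine (abs_add_three _ _ _).trans ?_
  rw [abs_mul, abs_mul, abs_of_nonneg ha, abs_of_nonneg (pow_nonneg ha _)]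
  gcongr

lemma dependsOn_larssonShift_sub_sub (h₁ : [r] <:+ z.1) (h₂ : [r] <:+ z.2) :
    DependsOn (fun u => larssonShift a b x u z - (u (false, [r]) - u (true, [r])))
      {(false, [r]), (true, [r])}ᶜ := by
  intro u u' h
  obtain ⟨p, hp⟩ := h₁
  obtain ⟨p', hp'⟩ := h₂
  have left_eq := @dependsOn_larssonLeft_sub_mul a b p [] r (fun w => u (false, w))
    (fun w => u' (false, w)) fun s hs => h (false, s) (by simpa using hs)
  have right_eq := @dependsOn_larssonLeft_sub_mul a b p' [] r (fun w => u (true, w))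
    (fun w => u' (true, w)) fun s hs => h (true, s) (by simpa using hs)
  simp only [larssonShift, ← hp, ← hp', List.length_nil, pow_zero, one_mul] at left_eq right_eq ⊢
  linarith

lemma le_measure_larssonShift_mem_Icc [IsProbabilityMeasure P] (hU : ∀ q, Measurable (U q))
    (hlaw : ∀ q, pdf.IsUniform (U q) (Set.Icc 0 t) P) (hind : iIndepFun U P) (ha : 0 ≤ a)
    (ha1 : a < 1) (ht : 0 < t) (hK : 0 ≤ K)
    (hR : a * (t / (1 - a)) +
      a ^ v.length * (2 * ((|b| + |1 / 2 + a / 2| + t) / (1 - a))) + |x| ≤ t - 3 * K)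
    (hα : -K ≤ α) (hβ : β ≤ K) (hle : α ≤ β) (hr : [r] <:+ v) (hz : z ∈ descendantPairs v N) :
    ENNReal.ofReal (K * (β - α) / t ^ 2) ≤
      P {ω | larssonShift a b x (U · ω) z ∈ Set.Icc α β} := by
  obtain ⟨hz₁, hz₂⟩ := Finset.mem_product.1 hz
  have suffix_left : [r] <:+ z.1 := hr.trans (suffix_of_mem_descendants hz₁)
  have suffix_right : [r] <:+ z.2 := hr.trans (suffix_of_mem_descendants hz₂)
  set R : (Bool × LarssonWord → ℝ) → ℝ :=
    fun u => larssonShift a b x u z - (u (false, [r]) - u (true, [r])) with hR_def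
  have R_measurable : Measurable R := (measurable_larssonShift z).sub (by fun_prop)
  have R_bounded : ∀ᵐ ω ∂P, |R (U · ω)| ≤ t - 3 * K := by
    filter_upwards [ae_all_iff.2 fun q => ae_mem_Icc_of_isUniform (hU q) (hlaw q)] with ω hω
    exact (abs_larssonShift_sub_sub_le ha ha1 hω hr hz).trans hR
  have R_indep : IndepFun (fun ω => R (U · ω)) (fun ω => U (false, [r]) ω - U (true, [r]) ω) P :=
    indepFun_comp_of_dependsOn (T := {(false, [r]), (true, [r])}) hU hind R_measurable
      (dependsOn_larssonShift_sub_sub suffix_left suffix_right)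
      (g := fun u => u (false, [r]) - u (true, [r])) (by fun_prop)
      (fun u u' h => by simp [h (false, [r]), h (true, [r])]) disjoint_compl_left
  have bound := ofReal_le_measure_add_sub_mem_Icc_of_isUniform (Y := fun ω => R (U · ω)) (hU _)
    (hlaw _) (hU _) (hlaw _) (hind.indepFun (by simp))
    (R_measurable.comp (measurable_pi_lambda _ hU)) R_indep ht hK R_bounded hα hβ hle
  simpa only [hR_def, sub_add_cancel] using bound

lemma le_sum_measureReal_larssonShift_mem_Icc [IsProbabilityMeasure P]
    (hU : ∀ q, Measurable (U q)) (hlaw : ∀ q, pdf.IsUniform (U q) (Set.Icc 0 t) P)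
    (hind : iIndepFun U P) (ha : 0 ≤ a) (ha1 : a < 1) (ht : 0 < t) (hK : 0 ≤ K)
    (hR : a * (t / (1 - a)) +
      a ^ v.length * (2 * ((|b| + |1 / 2 + a / 2| + t) / (1 - a))) + |x| ≤ t - 3 * K)
    (hα : -K ≤ α) (hβ : β ≤ K) (hle : α ≤ β) (hr : [r] <:+ v) :
    4 ^ N * (K * (β - α) / t ^ 2) ≤
      ∑ z ∈ descendantPairs v N, P.real {ω | larssonShift a b x (U · ω) z ∈ Set.Icc α β} := by
  rw [show (4 : ℝ) ^ N = (descendantPairs v N).card by rw [card_descendantPairs]; norm_num,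
    ← nsmul_eq_mul]
  exact Finset.card_nsmul_le_sum _ _ _ fun z hz =>
    (ENNReal.ofReal_le_iff_le_toReal (measure_ne_top _ _)).1
      (le_measure_larssonShift_mem_Icc hU hlaw hind ha ha1 ht hK hR hα hβ hle hr hz)

end LowerBound

section Counting

variable {a b x t K α β : ℝ} {v : LarssonWord} {r : Fin 2} {N : ℕ}

/-- The number of squares `N` generations below `Q_{(v,v)}` whose displacement lies in `A`, as a
real-valued function of the underlying variables so that its moments can be taken. -/
noncomputable def descendantCount (a b x : ℝ) (v : LarssonWord) (N : ℕ) (A : Set ℝ)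
    (u : Bool × LarssonWord → ℝ) : ℝ :=
  ∑ z ∈ descendantPairs v N, A.indicator 1 (larssonShift a b x u z)

lemma measurable_descendantCount {A : Set ℝ} (hA : MeasurableSet A) :
    Measurable (descendantCount a b x v N A) :=
  Finset.measurable_sum _ fun z _ =>
    (measurable_one.indicator hA).comp (measurable_larssonShift z)

lemma dependsOn_descendantCount (hr : [r] <:+ v) (A : Set ℝ) :
    DependsOn (descendantCount a b x v N A) {q | [r] <:+ q.2} := by
  intro u u' h
  refine Finset.sum_congr rfl fun z hz => congrArg _ (dependsOn_larssonShift z ?_)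
  rintro ⟨e, s⟩ ⟨hs_ne, hs⟩
  refine h _ (List.suffix_of_suffix_length_le ?_ hs (List.length_pos_iff.2 hs_ne))
  obtain ⟨hz₁, hz₂⟩ := Finset.mem_product.1 hz
  cases e
  · exact hr.trans (suffix_of_mem_descendants hz₁)
  · exact hr.trans (suffix_of_mem_descendants hz₂)

lemma descendantCount_le_larssonZ (ha : 0 < a) (u : Bool × LarssonWord → ℝ) :
    descendantCount a b x v N
        (Set.Icc (α * a ^ (N + v.length)) (β * a ^ (N + v.length))) u ≤
      larssonZ a b (fun w => u (false, w)) (fun w => u (true, w)) (N + v.length) x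
        (Set.Icc α β) := by
  classical
  set n := N + v.length
  set A : Set (LarssonWord × LarssonWord) := {p | p.1.length = n ∧ p.2.length = n ∧
    (larssonLeft a b (fun w => u (false, w)) p.1 - larssonLeft a b (fun w => u (true, w)) p.2 + x)
      / a ^ n ∈ Set.Icc α β}
  have A_finite : A.Finite :=
    ((List.finite_length_eq (Fin 2) n).prod (List.finite_length_eq (Fin 2) n)).subset
      fun p hp => ⟨hp.1, hp.2.1⟩
  have subset : ((descendantPairs v N).filter fun z =>
      larssonShift a b x u z ∈ Set.Icc (α * a ^ n) (β * a ^ n) : Set _) ⊆ A := by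
    intro z hz
    obtain ⟨hz, hmem⟩ := Finset.mem_filter.1 hz
    obtain ⟨hz₁, hz₂⟩ := length_eq_of_mem_descendantPairs hz
    exact ⟨hz₁, hz₂, (le_div_iff₀ (pow_pos ha n)).2 hmem.1, (div_le_iff₀ (pow_pos ha n)).2 hmem.2⟩
  have card_le := Set.ncard_le_ncard subset A_finite
  rw [Set.ncard_coe_finset] at card_le
  calc descendantCount a b x v N (Set.Icc (α * a ^ n) (β * a ^ n)) u
      = ((descendantPairs v N).filter fun z =>
          larssonShift a b x u z ∈ Set.Icc (α * a ^ n) (β * a ^ n)).card := by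
        simp only [descendantCount, Set.indicator_apply, Pi.one_apply, Finset.sum_boole]
    _ ≤ _ := Nat.cast_le.2 card_le

variable {Ω : Type*} [MeasurableSpace Ω] {P : Measure Ω} [IsProbabilityMeasure P]
  {U : Bool × LarssonWord → Ω → ℝ}

lemma le_measureReal_lt_descendantCount (hU : ∀ q, Measurable (U q))
    (hlaw : ∀ q, pdf.IsUniform (U q) (Set.Icc 0 t) P) (hind : iIndepFun U P) (ha : 1 / 4 < a)
    (ha1 : a < 1) (ht : 0 < t) (hK : 0 < K)
    (hR : a * (t / (1 - a)) +
      a ^ v.length * (2 * ((|b| + |1 / 2 + a / 2| + t) / (1 - a))) + |x| ≤ t - 3 * K)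
    (hα : -K ≤ α) (hβ : β ≤ K) (hαβ : β - α = K) (hr : [r] <:+ v) :
    (K / t) ^ 4 * a ^ v.length * ((4 * a - 1) / (16 * a)) ≤
      P.real {ω | (K / t) ^ 2 / (2 * 4 ^ v.length) * (4 * a) ^ (N + v.length) <
        descendantCount a b x v N
          (Set.Icc (α * a ^ (N + v.length)) (β * a ^ (N + v.length))) (U · ω)} := by
  have ha0 : 0 < a := by linarith
  have h4a : 0 < 4 * a - 1 := by linarith
  set n := N + v.length with hn
  have pow_le_one : a ^ n ≤ 1 := pow_le_one₀ ha0.le ha1.le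
  have left_le : -K ≤ α * a ^ n := by nlinarith [pow_pos ha0 n]
  have le_right : β * a ^ n ≤ K := by nlinarith [pow_pos ha0 n]
  have width : β * a ^ n - α * a ^ n = K * a ^ n := by rw [← sub_mul, hαβ]
  have left_le_right : α * a ^ n ≤ β * a ^ n := sub_nonneg.1 (width ▸ by positivity)
  set mean := 4 ^ N * (K * (β * a ^ n - α * a ^ n) / t ^ 2) with mean_def
  have mean_pos : 0 < mean := by
    rw [mean_def, width]
    positivity
  have K_le : K ≤ t := by
    have : 0 ≤ t - 3 * K := le_trans (by have := sub_pos.2 ha1; positivity) hR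
    linarith
  have paley_zygmund := sq_sub_le_measureReal_lt_sum_indicator_mul
    (fun z => (measurable_larssonShift z).comp (measurable_pi_lambda _ hU) measurableSet_Icc)
    (half_pos mean_pos).le (half_le_self mean_pos.le)
    (le_sum_measureReal_larssonShift_mem_Icc hU hlaw hind ha0.le ha1 ht hK.le hR left_le le_right
      left_le_right hr)
    (sum_measureReal_inter_le (b := b) (x := x) hU hind
      (fun q => map_le_smul_volume_of_isUniform (hlaw q)) ha hr
      (width ▸ inv_ofReal_mul_ofReal_mul_le ht K_le (pow_pos ha0 n).le))
  have threshold_eq : (K / t) ^ 2 / (2 * 4 ^ v.length) * (4 * a) ^ n = mean / 2 := by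
    rw [mean_def, width, hn]
    field_simp
    ring
  rw [threshold_eq]
  refine le_of_mul_le_mul_right (le_of_eq_of_le ?_ paley_zygmund) (by positivity)
  rw [mean_def, width, hn]
  field_simp
  ring

end Counting

section MainLemma

lemma exists_pos_add_pow_mul_add_le {a t : ℝ} (ha : 0 < a) (ha1 : a < 1 / 2) (ht : 0 < t)
    (M : ℝ) : ∃ K > 0, ∃ m : ℕ, a * (t / (1 - a)) + a ^ (m + 1) * M + K ≤ t - 3 * K := by
  set gap := t - a * (t / (1 - a)) with gap_def
  have gap_pos : 0 < gap := by
    have h1a : 0 < 1 - a := by linarith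
    rw [gap_def, sub_pos, ← mul_div_assoc, div_lt_iff₀ h1a, mul_comm]
    exact mul_lt_mul_of_pos_left (by linarith) ht
  have tendsto_zero : Filter.Tendsto (fun m : ℕ => a ^ (m + 1) * M) Filter.atTop (nhds 0) := by
    simpa using ((tendsto_pow_atTop_nhds_zero_of_lt_one ha.le (by linarith)).comp
      (Filter.tendsto_add_atTop_nat 1)).mul_const M
  obtain ⟨m, hm⟩ := (tendsto_zero.eventually_lt_const (half_pos gap_pos)).exists
  exact ⟨gap / 8, by positivity, m, by linarith⟩

variable {a b t K x : ℝ} {Ω : Type*} [MeasurableSpace Ω] {P : Measure Ω}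
  {U : Bool × LarssonWord → Ω → ℝ} {N : ℕ}

lemma indepFun_descendantCount (hU : ∀ q, Measurable (U q)) (hind : iIndepFun U P)
    {v v' : LarssonWord} {r r' : Fin 2} (hr : [r] <:+ v) (hr' : [r'] <:+ v') (hne : r ≠ r')
    {A B : Set ℝ} (hA : MeasurableSet A) (hB : MeasurableSet B) :
    IndepFun (fun ω => descendantCount a b x v N A (U · ω))
      (fun ω => descendantCount a b x v' N B (U · ω)) P := by
  refine indepFun_comp_of_dependsOn hU hind (measurable_descendantCount hA)
    (dependsOn_descendantCount hr A) (measurable_descendantCount hB)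
    (dependsOn_descendantCount hr' B) (Set.disjoint_left.2 fun q hq hq' => hne ?_)
  exact List.singleton_inj.1 ((List.suffix_of_suffix_length_le hq hq' le_rfl).eq_of_length rfl)

lemma le_measure_lt_larssonZ_and_lt_larssonZ [IsProbabilityMeasure P] (hU : ∀ q, Measurable (U q))
    (hlaw : ∀ q, pdf.IsUniform (U q) (Set.Icc 0 t) P) (hind : iIndepFun U P) (ha : 1 / 4 < a)
    (ha1 : a < 1) (ht : 0 < t) (hK : 0 < K) {v v' : LarssonWord} {r r' : Fin 2} (hr : [r] <:+ v)
    (hr' : [r'] <:+ v') (hne : r ≠ r') (hlen : v'.length = v.length)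
    (hR : a * (t / (1 - a)) +
      a ^ v.length * (2 * ((|b| + |1 / 2 + a / 2| + t) / (1 - a))) + |x| ≤ t - 3 * K) :
    ENNReal.ofReal (((K / t) ^ 4 * a ^ v.length * ((4 * a - 1) / (16 * a))) ^ 2) ≤
      P {ω | (K / t) ^ 2 / (2 * 4 ^ v.length) * (4 * a) ^ (N + v.length) <
              (larssonZ a b (fun w => U (false, w) ω) (fun w => U (true, w) ω) (N + v.length) x
                (Set.Icc (-K) 0) : ℝ) ∧
             (K / t) ^ 2 / (2 * 4 ^ v.length) * (4 * a) ^ (N + v.length) <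
              (larssonZ a b (fun w => U (false, w) ω) (fun w => U (true, w) ω) (N + v.length) x
                (Set.Icc 0 K) : ℝ)} := by
  have ha0 : 0 < a := by linarith
  have h4a : 0 < 4 * a - 1 := by linarith
  have often_left := le_measureReal_lt_descendantCount (N := N) hU hlaw hind ha ha1 ht hK hR
    le_rfl hK.le (by ring) hr
  have often_right := le_measureReal_lt_descendantCount (N := N) hU hlaw hind ha ha1 ht hK
    (hlen ▸ hR) (by linarith) le_rfl (sub_zero K) hr'
  have count_le_left := fun ω => descendantCount_le_larssonZ (b := b) (x := x) (v := v) (N := N)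
    (α := -K) (β := 0) ha0 (U · ω)
  have count_le_right := fun ω => descendantCount_le_larssonZ (b := b) (x := x) (v := v') (N := N)
    (α := 0) (β := K) ha0 (U · ω)
  rw [hlen] at often_right count_le_right
  have both_often := ofReal_sq_le_measure_lt_and_lt
    (indepFun_descendantCount (N := N) hU hind hr hr' hne measurableSet_Icc measurableSet_Icc)
    (by positivity) often_left often_right
  exact both_often.trans (measure_mono fun ω hω =>
    ⟨hω.1.trans_le (count_le_left ω), hω.2.trans_le (count_le_right ω)⟩)

theorem larsson_main_lemma_general (a b t : ℝ) (ha : 1 / 4 < a) (ha' : a < 1 / 2) (ht : 0 < t)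
    {Ω : Type*} [MeasurableSpace Ω] (P : Measure Ω) [IsProbabilityMeasure P]
    (U : Bool × LarssonWord → Ω → ℝ) (hUmeas : ∀ p, Measurable (U p))
    (hUlaw : ∀ p, pdf.IsUniform (U p) (Set.Icc 0 t) P) (hUindep : iIndepFun U P) :
    ∃ ρ : ℝ, 1 < ρ ∧ ∃ δ > (0 : ℝ), ∃ q > (0 : ℝ), ∃ K > (0 : ℝ), ∃ N : ℕ,
      ∀ n ≥ N, ∀ x ∈ Set.Icc (-K) K,
        ENNReal.ofReal q ≤
          P {ω | δ * ρ ^ n <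
                  (larssonZ a b (fun w => U (false, w) ω) (fun w => U (true, w) ω) n x
                    (Set.Icc (-K) 0) : ℝ) ∧
                 δ * ρ ^ n <
                  (larssonZ a b (fun w => U (false, w) ω) (fun w => U (true, w) ω) n x
                    (Set.Icc 0 K) : ℝ)} := by
  have ha0 : 0 < a := by linarith
  have h4a : 0 < 4 * a - 1 := by linarith
  obtain ⟨K, hK, m, hm⟩ := exists_pos_add_pow_mul_add_le ha0 ha' ht
    (2 * ((|b| + |1 / 2 + a / 2| + t) / (1 - a)))
  refine ⟨4 * a, by linarith, (K / t) ^ 2 / (2 * 4 ^ (m + 1)), by positivity,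
    ((K / t) ^ 4 * a ^ (m + 1) * ((4 * a - 1) / (16 * a))) ^ 2, by positivity, K, hK, m + 1,
    fun n hn x hx => ?_⟩
  obtain ⟨N, rfl⟩ := Nat.exists_eq_add_of_le' hn
  have x_le : |x| ≤ K := abs_le.2 hx
  have suffix : ∀ r : Fin 2, [r] <:+ List.replicate (m + 1) r := fun r =>
    List.replicate_succ' ▸ List.suffix_append _ _
  have both_often := le_measure_lt_larssonZ_and_lt_larssonZ (b := b) (x := x) (N := N) hUmeas
    hUlaw hUindep ha (by linarith) ht hK (suffix 0) (suffix 1) zero_ne_one (by simp)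
    (by simpa only [List.length_replicate] using by linarith)
  rwa [List.length_replicate] at both_often

end MainLemma

/-- (Main Lemma)  There exist `ρ > 1`, positive `δ, q, K` and `N ∈ ℕ` such that for every
`n ≥ N` and every `x ∈ [−K, K]`, with probability at least `q` both
`Z_n^x([−K,0]) > δ·ρ^n` and `Z_n^x([0,K]) > δ·ρ^n`. -/
theorem larsson_main_lemma
    (a b : ℝ) (ha : 1 / 4 < a) (hb : 0 < b) (hab : 3 * a + 2 * b < 1)
    {Ω : Type*} [MeasurableSpace Ω] (P : Measure Ω) [IsProbabilityMeasure P]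
    (U : Bool × LarssonWord → Ω → ℝ)
    (hUmeas : ∀ p, Measurable (U p))
    (hUlaw : ∀ p, P.map (U p) =
      (ENNReal.ofReal ((1 - 3 * a - 2 * b) / 2))⁻¹ •
        volume.restrict (Set.Icc 0 ((1 - 3 * a - 2 * b) / 2)))
    (hUindep : iIndepFun U P) :
    ∃ ρ : ℝ, 1 < ρ ∧ ∃ δ > (0 : ℝ), ∃ q > (0 : ℝ), ∃ K > (0 : ℝ), ∃ N : ℕ,
      ∀ n ≥ N, ∀ x ∈ Set.Icc (-K) K,
        ENNReal.ofReal q ≤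
          P {ω | δ * ρ ^ n <
                  (larssonZ a b (fun w => U (false, w) ω) (fun w => U (true, w) ω) n x
                    (Set.Icc (-K) 0) : ℝ) ∧
                 δ * ρ ^ n <
                  (larssonZ a b (fun w => U (false, w) ω) (fun w => U (true, w) ω) n x
                    (Set.Icc 0 K) : ℝ)} := by
  refine larsson_main_lemma_general a b ((1 - 3 * a - 2 * b) / 2) ha (by linarith) (by linarith)
    P U hUmeas (fun p => ?_) hUindep
  rw [pdf.IsUniform, hUlaw p, ProbabilityTheory.cond, Real.volume_Icc, sub_zero]
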